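/- arXiv:2502.02099 — 2 statements merged into one kernel-verified Lean document; each statement's English description precedes it below -/
import Mathlib

section
/- If a triple (x,F,Λ) ∈ R^n × S^d × S^d satisfies the second-order necessary conditions (2NC) for problem (SSV-Sym), and in addition F satisfies the eigenvalue condition (EC), then the pair (x,Λ) satisfies the second-order necessary conditions (2NC) for problem (NSDP). -/
open Matrix

/-- `P` is the Moore–Penrose pseudoinverse of `X`. -/
def IsMoorePenrose {d : ℕ} (X P : Matrix (Fin d) (Fin d) ℝ) : Prop :=
  X * P * X = X ∧ P * X * P = P ∧ (X * P)ᵀ = X * P ∧ (P * X)ᵀ = P * X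

/-- The directional derivative `DC_x[z]` of the matrix-valued map `C` at `x` along `z`. -/
noncomputable def DC {n d : ℕ} (C : (Fin n → ℝ) → Matrix (Fin d) (Fin d) ℝ)
    (x z : Fin n → ℝ) : Matrix (Fin d) (Fin d) ℝ :=
  Matrix.of fun i j => deriv (fun t : ℝ => C (x + t • z) i j) 0

/-- The second directional derivative `D²C_x[z,z]`. -/
noncomputable def D2C {n d : ℕ} (C : (Fin n → ℝ) → Matrix (Fin d) (Fin d) ℝ)
    (x z : Fin n → ℝ) : Matrix (Fin d) (Fin d) ℝ :=
  Matrix.of fun i j => iteratedDeriv 2 (fun t : ℝ => C (x + t • z) i j) 0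

/-- The second directional derivative `D²f_x[z,z]`. -/
noncomputable def D2f {n : ℕ} (f : (Fin n → ℝ) → ℝ) (x z : Fin n → ℝ) : ℝ :=
  iteratedDeriv 2 (fun t : ℝ => f (x + t • z)) 0

/-- First-order conditions (NSDP-1C) at `(x,Λ)`: `∇f(x) = DC_x*(Λ)` (w.r.t. the dot
product on `ℝ^n` and the trace inner product on `S^d`), `ΛC(x) = 0`, `C(x) ⪰ 0`, `Λ ⪰ 0`. -/
noncomputable def NSDP1C {n d : ℕ} (f : (Fin n → ℝ) → ℝ)
    (C : (Fin n → ℝ) → Matrix (Fin d) (Fin d) ℝ)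
    (x : Fin n → ℝ) (Λ : Matrix (Fin d) (Fin d) ℝ) : Prop :=
  Λ.IsSymm ∧
  (∀ z : Fin n → ℝ, HasDerivAt (fun t : ℝ => f (x + t • z)) ((Λ * DC C x z).trace) 0) ∧
  Λ * C x = 0 ∧ (C x).PosSemidef ∧ Λ.PosSemidef

/-- Second-order necessary conditions (NSDP-2NC) at `(x,Λ)`. -/
noncomputable def NSDP2NC {n d : ℕ} (f : (Fin n → ℝ) → ℝ)
    (C : (Fin n → ℝ) → Matrix (Fin d) (Fin d) ℝ)
    (x : Fin n → ℝ) (Λ : Matrix (Fin d) (Fin d) ℝ) : Prop :=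
  NSDP1C f C x Λ ∧
    ∀ V : Matrix (Fin d) (Fin (d - (C x).rank)) ℝ, Vᵀ * V = 1 → C x * V = 0 →
      ∀ P : Matrix (Fin d) (Fin d) ℝ, IsMoorePenrose (C x) P →
        ∀ z : Fin n → ℝ, Vᵀ * DC C x z * V = 0 →
          0 ≤ D2f f x z - (Λ * D2C C x z).trace
              + 2 * (DC C x z * P * DC C x z * Λ).trace

/-- The symmetric product `A∘B = (ABᵀ + BAᵀ)/2`. -/
noncomputable def symProd {d : ℕ} (A B : Matrix (Fin d) (Fin d) ℝ) :
    Matrix (Fin d) (Fin d) ℝ :=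
  (2⁻¹ : ℝ) • (A * Bᵀ + B * Aᵀ)

/-- Second-order necessary conditions (SSV-Sym-2NC) at `(x,F,Λ)` with `F ∈ S^d`. -/
noncomputable def SSVSym2NC {n d : ℕ} (f : (Fin n → ℝ) → ℝ)
    (C : (Fin n → ℝ) → Matrix (Fin d) (Fin d) ℝ)
    (x : Fin n → ℝ) (F Λ : Matrix (Fin d) (Fin d) ℝ) : Prop :=
  (Λ.IsSymm ∧
    (∀ z : Fin n → ℝ, HasDerivAt (fun t : ℝ => f (x + t • z)) ((Λ * DC C x z).trace) 0) ∧
    symProd Λ F = 0 ∧ C x = F * F) ∧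
  ∀ (z : Fin n → ℝ) (Δ : Matrix (Fin d) (Fin d) ℝ), Δ.IsSymm →
    DC C x z = (2 : ℝ) • symProd Δ F →
      0 ≤ D2f f x z + 2 * (Λ * (Δ * Δ)).trace - (Λ * D2C C x z).trace

/-- `a` is an eigenvalue of `F`. -/
def IsEigOf {d : ℕ} (F : Matrix (Fin d) (Fin d) ℝ) (a : ℝ) : Prop :=
  ∃ v : Fin d → ℝ, v ≠ 0 ∧ F.mulVec v = a • v

/-- The eigenvalue condition (EC): no two nonzero eigenvalues of `F` sum to `0`. -/
def EigCond {d : ℕ} (F : Matrix (Fin d) (Fin d) ℝ) : Prop :=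
  ∀ a b : ℝ, IsEigOf F a → IsEigOf F b → a ≠ 0 → b ≠ 0 → a + b ≠ 0

/-!
In an eigenbasis of `F` the Lyapunov operator `Δ ↦ ΔF + FΔ` multiplies the entry `(i, j)` by
`σᵢ + σⱼ`, and by (EC) this factor vanishes only if `σᵢ = σⱼ = 0`. This has two consequences.

* The first-order condition `ΛF + FΛ = 0` forces `ΛF = FΛ = 0`, so that `ΛC(x) = ΛF² = 0`. Moreover
  `Λ` is positive semidefinite as soon as `vᵀΛv ≥ 0` on `ker F`, which the second-order condition
  gives in the direction `(z, Δ) = (0, vvᵀ)`.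
* The equation `ΔF + FΔ = A := DC_x[z]` is solvable as soon as the form of `A` vanishes on
  `ker F = ker C(x)`, that is, `VᵀAV = 0`, and then the form of `Δ` can be chosen to vanish there
  as well. From `ΛA = ΛΔF` and `AΛ = FΔΛ` one gets `tr(A C(x)† A Λ) = tr(ΛΔ (F C(x)† F) Δ)`.
  Here `F C(x)† F` is the projection onto the range of `F`, which `ΛΔ` absorbs on its right because
  `Λ` has its columns in `ker F`. So the trace is `tr(ΛΔ²)`, and the second-order condition of the
  squared problem in the direction `(z, Δ)` is the one of (NSDP).
-/

/-- `VanishesOnKer F A` says that the sesquilinear form of `A` vanishes on the kernel of `F`.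
In a matrix ring, `F * X = 0` means that every column of `X` lies in `ker F`; quantifying over such
`X` instead of over vectors makes the notion invariant under star isomorphisms. -/
def VanishesOnKer {R : Type*} [Mul R] [Zero R] [Star R] (F A : R) : Prop :=
  ∀ X Y : R, F * X = 0 → F * Y = 0 → star X * A * Y = 0

lemma VanishesOnKer.of_mul_left {R : Type*} [SemigroupWithZero R] [Star R] {F A : R} (G : R)
    (h : VanishesOnKer (G * F) A) : VanishesOnKer F A := fun X Y hX hY =>
  h X Y (by rw [mul_assoc, hX, mul_zero]) (by rw [mul_assoc, hY, mul_zero])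

lemma VanishesOnKer.star_mul_mul_eq {R : Type*} [Ring R] [Star R] {F A X G : R}
    (h : VanishesOnKer F A) (hX : F * X = 0) (hG : F * G = F) : star X * A * G = star X * A := by
  have hker : F * (1 - G) = 0 := by rw [mul_sub, mul_one, hG, sub_self]
  have hzero := h X (1 - G) hX hker
  rwa [mul_sub, mul_one, sub_eq_zero, eq_comm] at hzero

lemma vanishesOnKer_map_iff {R S E : Type*} [NonUnitalNonAssocSemiring R] [Star R]
    [NonUnitalNonAssocSemiring S] [Star S] [EquivLike E R S] [RingEquivClass E R S]
    [StarHomClass E R S] (φ : E) {F A : R} :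
    VanishesOnKer (φ F) (φ A) ↔ VanishesOnKer F A := by
  simp only [VanishesOnKer, (EquivLike.surjective φ).forall, ← map_star, ← map_mul,
    map_eq_zero_iff φ (EquivLike.injective φ)]

lemma vanishesOnKer_diagonal_iff {n R : Type*} [Fintype n] [DecidableEq n] [Ring R]
    [NoZeroDivisors R] [StarRing R] {s : n → R} {A : Matrix n n R} :
    VanishesOnKer (diagonal s) A ↔ ∀ i j, s i = 0 → s j = 0 → A i j = 0 := by
  refine ⟨fun h i j hi hj => ?_, fun h X Y hX hY => ?_⟩
  · have hker : ∀ k, s k = 0 → diagonal s * single k k (1 : R) = 0 := fun k hk => by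
      rw [← diagonal_single, diagonal_mul_diagonal, diagonal_eq_zero]
      ext i
      by_cases hi : i = k <;> simp [hi, hk]
    simpa [star_eq_conjTranspose, single_mul_mul_single] using
      congrFun₂ (h _ _ (hker i hi) (hker j hj)) i j
  · have hrow : ∀ Z, diagonal s * Z = 0 → ∀ i k, s i = 0 ∨ Z i k = 0 := fun Z hZ i k => by
      simpa [diagonal_mul] using congrFun₂ hZ i k
    ext k l
    simp only [mul_apply, star_apply, Matrix.zero_apply]
    refine Finset.sum_eq_zero fun j _ => ?_
    rcases hrow Y hY j l with hj | hj
    · rw [Finset.sum_eq_zero fun i _ => ?_, zero_mul]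
      rcases hrow X hX i k with hi | hi
      · rw [h i j hi hj, mul_zero]
      · rw [hi, star_zero, zero_mul]
    · rw [hj, mul_zero]

section Lyapunov

variable {n : Type*} [Fintype n] [DecidableEq n]

lemma mul_diagonal_eq_zero_of_anticommute {R : Type*} [CommRing R] [NoZeroDivisors R] {s : n → R}
    (hs : ∀ i j, s i + s j = 0 → s i = 0) {L : Matrix n n R}
    (h : L * diagonal s + diagonal s * L = 0) : L * diagonal s = 0 := by
  ext i j
  have hij : (s j + s i) * L i j = 0 := by
    have := congrFun₂ h i j
    simp only [Matrix.add_apply, mul_diagonal, diagonal_mul, Matrix.zero_apply] at this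
    linear_combination this
  rw [mul_diagonal, Matrix.zero_apply, mul_comm]
  rcases mul_eq_zero.1 hij with hsum | hL
  · rw [hs j i hsum, zero_mul]
  · rw [hL, mul_zero]

lemma exists_lyapunov_diagonal {K : Type*} [Field K] [StarRing K] {s : n → K}
    (hstar : ∀ i, star (s i) = s i) (hs : ∀ i j, s i + s j = 0 → s i = 0) {A : Matrix n n K}
    (hA : IsSelfAdjoint A) (hsA : VanishesOnKer (diagonal s) A) :
    ∃ Δ, IsSelfAdjoint Δ ∧ Δ * diagonal s + diagonal s * Δ = A ∧
      VanishesOnKer (diagonal s) Δ := by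
  -- Where `s i = s j = 0` the denominator is `0`, so junk division already gives the entry `0`.
  refine ⟨of fun i j => A i j / (s i + s j), ?_, ?_, ?_⟩
  · ext i j
    have hAij : star (A j i) = A i j := congrFun₂ hA i j
    simp [star_apply, hstar, hAij, add_comm]
  · ext i j
    simp only [Matrix.add_apply, mul_diagonal, diagonal_mul, of_apply]
    by_cases hij : s i + s j = 0
    · have hi := hs i j hij
      have hj := hs j i (by rwa [add_comm])
      simp [hi, hj, vanishesOnKer_diagonal_iff.1 hsA i j hi hj]
    · field_simp
      ring
  · exact vanishesOnKer_diagonal_iff.2 fun i j hi hj => by simp [hi, hj]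

variable {𝕜 : Type*} [RCLike 𝕜] {F : Matrix n n 𝕜} (hF : F.IsHermitian)
  (hs : ∀ i j, hF.eigenvalues i + hF.eigenvalues j = 0 → hF.eigenvalues i = 0)
include hs

lemma exists_starAlgEquiv_diagonal :
    ∃ (φ : Matrix n n 𝕜 ≃⋆ₐ[𝕜] Matrix n n 𝕜) (s : n → 𝕜), φ (diagonal s) = F ∧
      (∀ i, star (s i) = s i) ∧ ∀ i j, s i + s j = 0 → s i = 0 := by
  refine ⟨_, _, hF.spectral_theorem.symm, fun i => RCLike.conj_ofReal _, fun i j hij => ?_⟩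
  simp only [Function.comp_apply] at hij ⊢
  exact_mod_cast hs i j (by exact_mod_cast hij)

lemma mul_eq_zero_of_anticommute {L : Matrix n n 𝕜} (h : L * F + F * L = 0) : L * F = 0 := by
  obtain ⟨φ, s, rfl, -, hs⟩ := exists_starAlgEquiv_diagonal hF hs
  obtain ⟨L, rfl⟩ := EquivLike.surjective φ L
  rw [← map_mul, ← map_mul, ← map_add, EmbeddingLike.map_eq_zero_iff] at h
  rw [← map_mul, mul_diagonal_eq_zero_of_anticommute hs h, map_zero]

lemma exists_lyapunov {A : Matrix n n 𝕜} (hA : A.IsHermitian) (hFA : VanishesOnKer F A) :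
    ∃ Δ : Matrix n n 𝕜, Δ.IsHermitian ∧ Δ * F + F * Δ = A ∧ VanishesOnKer F Δ := by
  obtain ⟨φ, s, rfl, hstar, hs⟩ := exists_starAlgEquiv_diagonal hF hs
  obtain ⟨A, rfl⟩ := EquivLike.surjective φ A
  have hA' : IsSelfAdjoint A := EquivLike.injective φ ((map_star φ A).trans hA)
  obtain ⟨Δ, hΔ, hΔA, hsΔ⟩ :=
    exists_lyapunov_diagonal hstar hs hA' ((vanishesOnKer_map_iff φ).1 hFA)
  refine ⟨φ Δ, hΔ.map φ, ?_, (vanishesOnKer_map_iff φ).2 hsΔ⟩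
  rw [← map_mul, ← map_mul, ← map_add, hΔA]

end Lyapunov

lemma mul_mul_eq_of_mul_eq_zero {K m n k l : Type*} [Field K] [Finite m] [Fintype n] [Fintype k]
    [DecidableEq k] {X : Matrix m n K} {V : Matrix n k K} {V' : Matrix k n K}
    (hV : V' * V = 1) (hXV : X * V = 0) (hcard : Fintype.card n ≤ X.rank + Fintype.card k)
    {Y : Matrix n l K} (hXY : X * Y = 0) : V * (V' * Y) = Y := by
  have hle : LinearMap.range V.mulVecLin ≤ LinearMap.ker X.mulVecLin := by
    rw [LinearMap.range_le_ker_iff, ← mulVecLin_mul, hXV, mulVecLin_zero]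
  have hrank : Fintype.card k ≤ V.rank := by
    simpa only [hV, rank_one] using rank_mul_le_right V' V
  have hrange : LinearMap.range V.mulVecLin = LinearMap.ker X.mulVecLin := by
    refine Submodule.eq_of_le_of_finrank_le hle ?_
    have hX := LinearMap.finrank_range_add_finrank_ker X.mulVecLin
    rw [Module.finrank_fintype_fun_eq_card] at hX
    simp only [Matrix.rank] at hcard hrank
    lia
  refine ext_col fun j => ?_
  obtain ⟨u, hu⟩ : Y.col j ∈ LinearMap.range V.mulVecLin := by
    rw [hrange]
    exact congrArg (col · j) hXY
  calc (V * (V' * Y)).col j = V *ᵥ (V' *ᵥ Y.col j) := rfl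
    _ = V *ᵥ ((V' * V) *ᵥ u) := by rw [← hu, mulVecLin_apply, mulVec_mulVec u]
    _ = Y.col j := by rw [hV, one_mulVec, ← hu, mulVecLin_apply]

lemma vanishesOnKer_of_conjTranspose_mul_mul_eq_zero {K n k : Type*} [Field K] [StarRing K]
    [Fintype n] [Fintype k] [DecidableEq k] {X A : Matrix n n K} {V : Matrix n k K}
    (hV : Vᴴ * V = 1) (hXV : X * V = 0) (hcard : Fintype.card n ≤ X.rank + Fintype.card k)
    (hA : Vᴴ * A * V = 0) : VanishesOnKer X A := by
  intro Y Z hY hZ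
  rw [← mul_mul_eq_of_mul_eq_zero hV hXV hcard hY, ← mul_mul_eq_of_mul_eq_zero hV hXV hcard hZ,
    star_eq_conjTranspose, conjTranspose_mul V]
  calc (Vᴴ * Y)ᴴ * Vᴴ * A * (V * (Vᴴ * Z)) = (Vᴴ * Y)ᴴ * (Vᴴ * A * V) * (Vᴴ * Z) := by
        simp only [Matrix.mul_assoc]
    _ = 0 := by rw [hA, Matrix.mul_zero, Matrix.zero_mul]

lemma trace_lyapunov_mul_mul_lyapunov_mul {n R : Type*} [Fintype n] [CommRing R]
    {F P L Δ : Matrix n n R} (hLF : L * F = 0) (hFL : F * L = 0)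
    (hLΔ : L * Δ * (F * P * F) = L * Δ) :
    ((Δ * F + F * Δ) * P * (Δ * F + F * Δ) * L).trace = (L * (Δ * Δ)).trace := by
  have hAL : (Δ * F + F * Δ) * L = F * Δ * L := by
    rw [Matrix.add_mul, Matrix.mul_assoc Δ, hFL, Matrix.mul_zero, zero_add]
  have hLA : L * (Δ * F + F * Δ) = L * Δ * F := by
    rw [Matrix.mul_add, ← Matrix.mul_assoc, ← Matrix.mul_assoc, hLF, Matrix.zero_mul, add_zero]
  calc ((Δ * F + F * Δ) * P * (Δ * F + F * Δ) * L).trace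
      = ((Δ * F + F * Δ) * P * (F * Δ) * L).trace := by
        rw [Matrix.mul_assoc _ _ L, hAL, ← Matrix.mul_assoc]
    _ = (L * (Δ * F + F * Δ) * P * (F * Δ)).trace := by
        rw [trace_mul_comm]; simp only [Matrix.mul_assoc]
    _ = (L * Δ * (F * P * F) * Δ).trace := by
        rw [hLA]; simp only [Matrix.mul_assoc]
    _ = (L * (Δ * Δ)).trace := by rw [hLΔ, Matrix.mul_assoc]

lemma mul_mul_mul_eq_self_of_inner_inverse {n R : Type*} [Fintype n] [PartialOrder R]
    [Ring R] [StarRing R] [StarOrderedRing R] [NoZeroDivisors R] {F P : Matrix n n R}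
    (hF : F.IsHermitian) (hP : F * F * P * (F * F) = F * F) : F * (F * P * F) = F := by
  classical
  have hzero : (F * F * P - 1) * (F * Fᴴ) = 0 := by
    rw [hF.eq, Matrix.sub_mul, hP, Matrix.one_mul, sub_self]
  rw [mul_self_mul_conjTranspose_eq_zero, Matrix.sub_mul, Matrix.one_mul, sub_eq_zero] at hzero
  simpa only [Matrix.mul_assoc] using hzero

open scoped ComplexOrder in
lemma posSemidef_of_nonneg_on_ker {m n 𝕜 : Type*} [Fintype n] [RCLike 𝕜]
    {F : Matrix m n 𝕜} {L : Matrix n n 𝕜} (hL : L.IsHermitian) (hFL : F * L = 0)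
    (h : ∀ v, F *ᵥ v = 0 → 0 ≤ star v ⬝ᵥ (L *ᵥ v)) : L.PosSemidef := by
  classical
  refine hL.posSemidef_iff_eigenvalues_nonneg.2 fun i => ?_
  rcases eq_or_ne (hL.eigenvalues i) 0 with hi | hi
  · exact hi.ge
  have hv : F *ᵥ ⇑(hL.eigenvectorBasis i) = 0 := by
    refine (smul_eq_zero.1 ?_).resolve_left hi
    rw [← mulVec_smul, ← hL.mulVec_eigenvectorBasis, mulVec_mulVec, hFL, zero_mulVec]
  rw [Pi.zero_apply, hL.eigenvalues_eq]
  exact (RCLike.nonneg_iff.1 (h _ hv)).1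

section DirectionalDerivative

variable {n d : ℕ} (f : (Fin n → ℝ) → ℝ) (C : (Fin n → ℝ) → Matrix (Fin d) (Fin d) ℝ)
  (x : Fin n → ℝ)

lemma DC_zero : DC C x 0 = 0 := by
  ext i j
  simp [DC]

lemma D2C_zero : D2C C x 0 = 0 := by
  ext i j
  simp [D2C, iteratedDeriv_const]

lemma D2f_zero : D2f f x 0 = 0 := by
  simp [D2f, iteratedDeriv_const]

variable {C} in
lemma isSymm_DC (hC : ∀ x, (C x).IsSymm) (z : Fin n → ℝ) : (DC C x z).IsSymm := by
  ext i j
  simp only [DC, transpose_apply, of_apply, (hC _).apply]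

end DirectionalDerivative

section Optimality

variable {n d : ℕ} {f : (Fin n → ℝ) → ℝ} {C : (Fin n → ℝ) → Matrix (Fin d) (Fin d) ℝ}
  {x : Fin n → ℝ} {F Λ : Matrix (Fin d) (Fin d) ℝ}

lemma two_smul_symProd {A B : Matrix (Fin d) (Fin d) ℝ} (hA : A.IsSymm) (hB : B.IsSymm) :
    (2 : ℝ) • symProd A B = A * B + B * A := by
  rw [symProd, hA.eq, hB.eq, smul_inv_smul₀ two_ne_zero]

lemma EigCond.eigenvalues_eq_zero_of_add_eq_zero (hEC : EigCond F) (hF : F.IsHermitian)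
    (i j : Fin d) (h : hF.eigenvalues i + hF.eigenvalues j = 0) : hF.eigenvalues i = 0 := by
  have hEig : ∀ k, IsEigOf F (hF.eigenvalues k) := fun k =>
    ⟨hF.eigenvectorBasis k, by simpa using hF.eigenvectorBasis.orthonormal.ne_zero k,
      hF.mulVec_eigenvectorBasis k⟩
  by_contra hi
  exact hEC _ _ (hEig i) (hEig j) hi (fun hj => hi (by rwa [hj, add_zero] at h)) h

namespace SSVSym2NC

lemma multiplier_mul_eq_zero (h : SSVSym2NC f C x F Λ) (hF : F.IsSymm) (hEC : EigCond F) :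
    Λ * F = 0 := by
  obtain ⟨⟨hΛ, -, hΛF, -⟩, -⟩ := h
  refine mul_eq_zero_of_anticommute _
    (hEC.eigenvalues_eq_zero_of_add_eq_zero (isHermitian_iff_isSymm.2 hF)) ?_
  rw [← two_smul_symProd hΛ hF, hΛF, smul_zero]

lemma mul_multiplier_eq_zero (h : SSVSym2NC f C x F Λ) (hF : F.IsSymm) (hEC : EigCond F) :
    F * Λ = 0 := by
  simpa only [transpose_mul, hF.eq, h.1.1.eq, transpose_zero] using
    congrArg transpose (h.multiplier_mul_eq_zero hF hEC)

lemma trace_mul_sq_nonneg (h : SSVSym2NC f C x F Λ) (hF : F.IsSymm) {Δ : Matrix (Fin d) (Fin d) ℝ}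
    (hΔ : Δ.IsSymm) (hΔF : Δ * F + F * Δ = 0) : 0 ≤ (Λ * (Δ * Δ)).trace := by
  have h0 := h.2 0 Δ hΔ (by rw [DC_zero, two_smul_symProd hΔ hF, hΔF])
  rw [D2f_zero, D2C_zero, Matrix.mul_zero, trace_zero, sub_zero, zero_add] at h0
  linarith

lemma posSemidef_multiplier (h : SSVSym2NC f C x F Λ) (hF : F.IsSymm) (hEC : EigCond F) :
    Λ.PosSemidef := by
  refine posSemidef_of_nonneg_on_ker (isHermitian_iff_isSymm.2 h.1.1)
    (h.mul_multiplier_eq_zero hF hEC) fun v hv => ?_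
  have hvF : v ᵥ* F = 0 := by rw [← hF.eq, vecMul_transpose, hv]
  -- The direction `Δ = v vᵀ` is admissible at `z = 0`, and `tr(ΛΔ²) = |v|² vᵀΛv`.
  have htrace : 0 ≤ (v ⬝ᵥ v) * (v ⬝ᵥ (Λ *ᵥ v)) := by
    have := h.trace_mul_sq_nonneg hF (Δ := vecMulVec v v) (transpose_vecMulVec v v) (by
      rw [vecMulVec_mul, mul_vecMulVec, hv, hvF, vecMulVec_zero, zero_vecMulVec, add_zero])
    rwa [vecMulVec_mul_vecMulVec, mul_vecMulVec, trace_vecMulVec, dotProduct_smul,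
      dotProduct_comm (Λ *ᵥ v), smul_eq_mul] at this
  rw [star_trivial]
  rcases eq_or_ne v 0 with rfl | hv0
  · rw [zero_dotProduct]
  · exact nonneg_of_mul_nonneg_right htrace (by simpa using dotProduct_star_self_pos_iff.2 hv0)

end SSVSym2NC

end Optimality

/-- If `(x,F,Λ)` satisfies 2NC for (SSV-Sym) and `F` satisfies the eigenvalue
condition (EC), then `(x,Λ)` satisfies 2NC for (NSDP). -/
theorem statement13 {n d : ℕ} (f : (Fin n → ℝ) → ℝ)
    (C : (Fin n → ℝ) → Matrix (Fin d) (Fin d) ℝ)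
    (hf : ContDiff ℝ 2 f)
    (hC : ∀ i j, ContDiff ℝ 2 fun x => C x i j)
    (hCsymm : ∀ x, (C x).IsSymm)
    (x : Fin n → ℝ) (F Λ : Matrix (Fin d) (Fin d) ℝ) (hFsymm : F.IsSymm)
    (h2 : SSVSym2NC f C x F Λ) (hEC : EigCond F) :
    NSDP2NC f C x Λ := by
  have hΛF : Λ * F = 0 := h2.multiplier_mul_eq_zero hFsymm hEC
  have hFΛ : F * Λ = 0 := h2.mul_multiplier_eq_zero hFsymm hEC
  have hΛpos : Λ.PosSemidef := h2.posSemidef_multiplier hFsymm hEC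
  have hF : F.IsHermitian := isHermitian_iff_isSymm.2 hFsymm
  obtain ⟨⟨hΛ, hgrad, -, hCF⟩, hcurv⟩ := h2
  have hCpos : (C x).PosSemidef := by
    simpa only [hCF, hF.eq] using posSemidef_conjTranspose_mul_self F
  refine ⟨⟨hΛ, hgrad, by rw [hCF, ← Matrix.mul_assoc, hΛF, Matrix.zero_mul], hCpos, hΛpos⟩, ?_⟩
  intro V hV hCV P hP z hz
  have hker : VanishesOnKer (C x) (DC C x z) :=
    vanishesOnKer_of_conjTranspose_mul_mul_eq_zero (V := V) hV hCV
      (by simp only [Fintype.card_fin]; lia) hz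
  obtain ⟨Δ, hΔ, hΔF, hFΔ⟩ := exists_lyapunov hF (hEC.eigenvalues_eq_zero_of_add_eq_zero hF)
    (isHermitian_iff_isSymm.2 (isSymm_DC x hCsymm z)) ((hCF ▸ hker).of_mul_left F)
  have hG : F * (F * P * F) = F := mul_mul_mul_eq_self_of_inner_inverse hF (hCF ▸ hP.1)
  have htrace : (DC C x z * P * DC C x z * Λ).trace = (Λ * (Δ * Δ)).trace := by
    rw [← hΔF]
    exact trace_lyapunov_mul_mul_lyapunov_mul hΛF hFΛ
      (hΛpos.isHermitian.eq ▸ hFΔ.star_mul_mul_eq hFΛ hG)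
  have hnonneg := hcurv z Δ (isHermitian_iff_isSymm.1 hΔ)
    (by rw [two_smul_symProd (isHermitian_iff_isSymm.1 hΔ) hFsymm, hΔF])
  linarith
end

section
/- If F ∈ S^d is a local minimizer of problem (DSS-Sym) and F satisfies the eigenvalue condition (EC), then X = F² is a local minimizer of problem (BC). Moreover, if F is a strict local minimizer of (DSS-Sym), then X = F² is a strict local minimizer of (BC). -/
open Matrix

/-- The Frobenius norm of a matrix. -/
noncomputable def frob {d : ℕ} (A : Matrix (Fin d) (Fin d) ℝ) : ℝ :=
  Real.sqrt (∑ i, ∑ j, (A i j) ^ 2)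

/-- `X` is a local minimizer of (BC): `X ⪰ 0` and `h(X') ≥ h(X)` for all `X' ⪰ 0` close to
`X` in Frobenius norm. -/
noncomputable def BCLocalMin {d : ℕ} (h : Matrix (Fin d) (Fin d) ℝ → ℝ)
    (X : Matrix (Fin d) (Fin d) ℝ) : Prop :=
  X.PosSemidef ∧ ∃ ε > (0 : ℝ), ∀ X' : Matrix (Fin d) (Fin d) ℝ,
    X'.PosSemidef → frob (X' - X) ≤ ε → h X ≤ h X'

/-- `X` is a strict local minimizer of (BC). -/
noncomputable def BCStrictLocalMin {d : ℕ} (h : Matrix (Fin d) (Fin d) ℝ → ℝ)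
    (X : Matrix (Fin d) (Fin d) ℝ) : Prop :=
  X.PosSemidef ∧ ∃ ε > (0 : ℝ), ∀ X' : Matrix (Fin d) (Fin d) ℝ,
    X'.PosSemidef → frob (X' - X) ≤ ε → X' ≠ X → h X < h X'

/-- `F ∈ S^d` is a local minimizer of (DSS-Sym): `g(G) = h(G²) ≥ h(F²) = g(F)` for all
symmetric `G` close to `F` in Frobenius norm. -/
noncomputable def DSSSymLocalMin {d : ℕ} (h : Matrix (Fin d) (Fin d) ℝ → ℝ)
    (F : Matrix (Fin d) (Fin d) ℝ) : Prop :=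
  ∃ ε > (0 : ℝ), ∀ G : Matrix (Fin d) (Fin d) ℝ,
    G.IsSymm → frob (G - F) ≤ ε → h (F * F) ≤ h (G * G)

/-- `F ∈ S^d` is a strict local minimizer of (DSS-Sym). -/
noncomputable def DSSSymStrictLocalMin {d : ℕ} (h : Matrix (Fin d) (Fin d) ℝ → ℝ)
    (F : Matrix (Fin d) (Fin d) ℝ) : Prop :=
  ∃ ε > (0 : ℝ), ∀ G : Matrix (Fin d) (Fin d) ℝ,
    G.IsSymm → frob (G - F) ≤ ε → G ≠ F → h (F * F) < h (G * G)

/-!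
Under (EC) the assignment `a² ↦ a` on the spectrum of `F²` extends to a branch `f` of `±√` that is
continuous near that spectrum. Hence the functional calculus `X ↦ f(X)` is continuous at `F²`, where
its value is `F`, and produces symmetric square roots close to `F`: squaring is open at `F` onto the
positive semidefinite cone, and local minimality of `F` transfers to `F²`.

Strict minimality forces (EC): if `F v = a v` and `F w = -a w` with `a ≠ 0`, then
`K = v wᵀ - w vᵀ` is skew and anticommutes with `F`, so `exp (t K) F` is a curve of symmetric
square roots of `F²` leaving `F`.
-/

open Set Filter Topology

section SquareRootBranch

theorem exists_sqrt_branch {K : Set ℝ} (hK : IsCompact K) (hneg : IsClosed (K ∩ Iio 0))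
    (hEC : ∀ x ∈ K, x ≠ 0 → -x ∉ K) :
    ∃ f : ℝ → ℝ, (∀ x, 0 ≤ x → f x ^ 2 = x) ∧ (∀ x ∈ K, f (x ^ 2) = x) ∧
      ∃ U ∈ 𝓝ˢ ((· ^ 2) '' K), ContinuousOn f U := by
  classical
  have hsq : Continuous fun x : ℝ ↦ x ^ 2 := continuous_pow 2
  have hdisj : Disjoint ((· ^ 2) '' (K ∩ Ici 0)) ((· ^ 2) '' (K ∩ Iio 0)) := by
    rw [Set.disjoint_left]
    rintro _ ⟨x, ⟨hxK, hx : 0 ≤ x⟩, rfl⟩ ⟨y, ⟨hyK, hy : y < 0⟩, hyx⟩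
    rcases sq_eq_sq_iff_eq_or_eq_neg.mp hyx with rfl | rfl
    · exact hy.not_ge hx
    · exact hEC x hxK (by rintro rfl; simp at hy) hyK
  obtain ⟨U, V, hU, hV, hKU, hKV, hUV⟩ := SeparatedNhds.of_isCompact_isCompact
    ((hK.inter_right isClosed_Ici).image hsq)
    ((hK.of_isClosed_subset hneg inter_subset_left).image hsq) hdisj
  refine ⟨V.piecewise (fun x ↦ -√x) Real.sqrt, fun x hx ↦ ?_, fun x hx ↦ ?_, U ∪ V, ?_, ?_⟩
  · by_cases hxV : x ∈ V <;> simp [hxV, Real.sq_sqrt hx]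
  · rcases le_or_gt 0 x with h0 | h0
    · have : x ^ 2 ∉ V := hUV.notMem_of_mem_left (hKU ⟨x, ⟨hx, h0⟩, rfl⟩)
      simp [this, Real.sqrt_sq h0]
    · have : x ^ 2 ∈ V := hKV ⟨x, ⟨hx, h0⟩, rfl⟩
      simp [this, Real.sqrt_sq_eq_abs, abs_of_neg h0]
  · refine (hU.union hV).mem_nhdsSet.mpr ?_
    rintro _ ⟨x, hx, rfl⟩
    exact (le_or_gt 0 x).imp (fun h ↦ hKU ⟨x, ⟨hx, h⟩, rfl⟩) (fun h ↦ hKV ⟨x, ⟨hx, h⟩, rfl⟩)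
  · refine ContinuousOn.union_of_isOpen ?_ ?_ hU hV
    · exact Real.continuous_sqrt.continuousOn.congr
        fun x hx ↦ piecewise_eq_of_notMem _ _ _ (hUV.notMem_of_mem_left hx)
    · exact Real.continuous_sqrt.neg.continuousOn.congr fun x hx ↦ piecewise_eq_of_mem _ _ _ hx

end SquareRootBranch

section FunctionalCalculus

theorem continuousWithinAt_cfc_of_mem_nhdsSet {𝕜 A : Type*} {p : A → Prop} [RCLike 𝕜]
    [NormedRing A] [StarRing A] [NormedAlgebra 𝕜 A] [CompleteSpace A] [ContinuousStar A]
    [IsometricContinuousFunctionalCalculus 𝕜 A p] {f : 𝕜 → 𝕜} {a : A} {U : Set 𝕜} (ha : p a)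
    (hU : U ∈ 𝓝ˢ (spectrum 𝕜 a)) (hf : ContinuousOn f U) :
    ContinuousWithinAt (cfc f) {b | p b} a := by
  have hnear : {b : A | U ∈ 𝓝ˢ (spectrum 𝕜 b)} ∈ 𝓝 a :=
    (upperHemicontinuous_spectrum 𝕜 A).upperHemicontinuousAt a U hU
  have hcont : ContinuousOn (cfc f) {b : A | p b ∧ U ∈ 𝓝ˢ (spectrum 𝕜 b)} :=
    continuousOn_id.cfc_of_mem_nhdsSet f (s := U)
      (by simp +contextual [nhdsSet_iUnion]) (fun b hb ↦ hb.1)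
  exact (continuousWithinAt_inter hnear).mp (hcont a ⟨ha, hU⟩)

theorem nhdsWithin_nonneg_sq_le_map_sq {A : Type*} [NormedRing A] [StarRing A] [PartialOrder A]
    [StarOrderedRing A] [NormedAlgebra ℝ A] [NonnegSpectrumClass ℝ A] [CompleteSpace A]
    [ContinuousStar A] [IsometricContinuousFunctionalCalculus ℝ A IsSelfAdjoint] {a : A}
    (ha : IsSelfAdjoint a) (hneg : IsClosed (spectrum ℝ a ∩ Iio 0))
    (hEC : ∀ x ∈ spectrum ℝ a, x ≠ 0 → -x ∉ spectrum ℝ a) :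
    𝓝[Ici 0] (a ^ 2) ≤ map (· ^ 2) (𝓝[{b | IsSelfAdjoint b}] a) := by
  obtain ⟨f, hf_sq, hf_inv, U, hU, hfU⟩ := exists_sqrt_branch (spectrum.isCompact a) hneg hEC
  rw [← cfc_map_spectrum (R := ℝ) (fun x ↦ x ^ 2) a, cfc_pow_id a 2] at hU
  have hcfc : cfc f (a ^ 2) = a := by
    have hcont : ContinuousOn f ((· ^ 2) '' spectrum ℝ a) := by
      rw [← cfc_map_spectrum (R := ℝ) (fun x ↦ x ^ 2) a, cfc_pow_id a 2]
      exact hfU.mono (subset_of_mem_nhdsSet hU)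
    rw [← cfc_comp_pow f 2 a hcont, cfc_congr hf_inv, cfc_id' ℝ a]
  have hroot : ∀ᶠ b in 𝓝[Ici 0] (a ^ 2), cfc f b ^ 2 = b := by
    have hnear : ∀ᶠ b in 𝓝 (a ^ 2), U ∈ 𝓝ˢ (spectrum ℝ b) :=
      (upperHemicontinuous_spectrum ℝ A).upperHemicontinuousAt (a ^ 2) U hU
    filter_upwards [self_mem_nhdsWithin, hnear.filter_mono nhdsWithin_le_nhds] with b hb hbU
    have hb_sa : IsSelfAdjoint b := .of_nonneg hb
    rw [← cfc_pow f 2 b (hfU.mono (subset_of_mem_nhdsSet hbU)),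
      cfc_congr fun x hx ↦ hf_sq x (spectrum_nonneg_of_nonneg hb hx), cfc_id' ℝ b]
  have htend : Tendsto (cfc f) (𝓝[Ici 0] (a ^ 2)) (𝓝[{b | IsSelfAdjoint b}] a) := by
    refine tendsto_nhdsWithin_iff.mpr ⟨?_, .of_forall fun b ↦ cfc_predicate f b⟩
    have hsub : Ici (0 : A) ⊆ {b | IsSelfAdjoint b} := fun _ hb ↦ .of_nonneg hb
    have hcont := (continuousWithinAt_cfc_of_mem_nhdsSet (ha.pow 2) hU hfU).mono hsub
    simpa only [hcfc] using hcont.tendsto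
  exact le_map_of_right_inverse hroot htend

end FunctionalCalculus

section Isospectral

variable {A : Type*} [NormedRing A] [NormedAlgebra ℝ A] [CompleteSpace A]

open NormedSpace

theorem sq_exp_mul_of_semiconjBy_neg {a k : A} (h : SemiconjBy a k (-k)) :
    (exp k * a) ^ 2 = a ^ 2 := by
  let : NormedAlgebra ℚ A := .restrictScalars ℚ ℝ A
  have hexp : a * exp k = exp (-k) * a := h.exp_right
  calc (exp k * a) ^ 2 = exp k * (a * exp k) * a := by noncomm_ring
    _ = (exp k * exp (-k)) * a ^ 2 := by rw [hexp]; noncomm_ring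
    _ = a ^ 2 := by
      rw [← exp_add_of_commute (Commute.refl k).neg_right, add_neg_cancel, exp_zero, one_mul]

theorem isSelfAdjoint_exp_mul_of_semiconjBy_neg [StarRing A] [ContinuousStar A] {a k : A}
    (ha : IsSelfAdjoint a) (hk : star k = -k) (h : SemiconjBy a k (-k)) :
    IsSelfAdjoint (exp k * a) := by
  let : NormedAlgebra ℚ A := .restrictScalars ℚ ℝ A
  have hexp : a * exp (-k) = exp k * a := by
    simpa using h.neg_right.exp_right.eq
  rw [IsSelfAdjoint, star_mul, ha.star_eq, star_exp, hk, hexp]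

theorem frequently_isSelfAdjoint_sq_eq [StarRing A] [ContinuousStar A] [StarModule ℝ A] {a k : A}
    (ha : IsSelfAdjoint a) (hk : star k = -k) (h : SemiconjBy a k (-k)) (hka : k * a ≠ 0) :
    ∃ᶠ b in 𝓝[{b | IsSelfAdjoint b} \ {a}] a, b ^ 2 = a ^ 2 := by
  have hderiv : HasDerivAt (fun t : ℝ ↦ exp (t • k) * a) (k * a) 0 := by
    simpa using (hasDerivAt_exp_smul_const (𝕂 := ℝ) k 0).mul_const a
  have hsemi (t : ℝ) : SemiconjBy a (t • k) (-(t • k)) := by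
    simpa [SemiconjBy] using congr(t • $h)
  have htend : Tendsto (fun t : ℝ ↦ exp (t • k) * a) (𝓝[≠] 0)
      (𝓝[{b | IsSelfAdjoint b} \ {a}] a) := by
    refine tendsto_nhdsWithin_iff.mpr ⟨?_, ?_⟩
    · simpa using hderiv.continuousAt.tendsto.mono_left nhdsWithin_le_nhds
    · filter_upwards [hderiv.eventually_ne (c := a) hka] with t ht
      exact ⟨isSelfAdjoint_exp_mul_of_semiconjBy_neg ha (by simp [hk]) (hsemi t), ht⟩
  exact htend.frequently (Frequently.of_forall fun t ↦ sq_exp_mul_of_semiconjBy_neg (hsemi t))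

end Isospectral

section SkewAnticommutator

variable {n R : Type*} [CommRing R] {v w : n → R}

theorem vecMulVec_add_vecMulVec_ne_zero [NoZeroDivisors R] [NeZero (2 : R)] (hv : v ≠ 0)
    (hw : w ≠ 0) : vecMulVec v w + vecMulVec w v ≠ 0 := by
  obtain ⟨i, hi⟩ := Function.ne_iff.mp hv
  obtain ⟨j, hj⟩ := Function.ne_iff.mp hw
  intro h
  have hii : v i * w i + w i * v i = 0 := congr($h i i)
  have hij : v i * w j + w i * v j = 0 := congr($h i j)
  have hwi : w i = 0 := by
    have : 2 * (v i * w i) = 0 := by linear_combination hii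
    exact (mul_eq_zero.mp ((mul_eq_zero.mp this).resolve_left two_ne_zero)).resolve_left hi
  exact mul_ne_zero hi hj (by simpa [hwi] using hij)

variable [Fintype n] {F : Matrix n n R} {c : R}

theorem mul_vecMulVec_sub_vecMulVec (hv : F *ᵥ v = c • v) (hw : F *ᵥ w = -c • w) :
    F * (vecMulVec v w - vecMulVec w v) = c • (vecMulVec v w + vecMulVec w v) := by
  simp [Matrix.mul_sub, mul_vecMulVec, hv, hw, smul_vecMulVec, smul_add, neg_vecMulVec]

theorem vecMulVec_sub_vecMulVec_mul (hF : F.IsSymm) (hv : F *ᵥ v = c • v) (hw : F *ᵥ w = -c • w) :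
    (vecMulVec v w - vecMulVec w v) * F = -(c • (vecMulVec v w + vecMulVec w v)) := by
  simp [Matrix.sub_mul, vecMulVec_mul, ← mulVec_transpose, hF.eq, hv, hw, vecMulVec_smul]
  abel

end SkewAnticommutator

section FrobeniusNeighborhoods

variable {d : ℕ} {h : Matrix (Fin d) (Fin d) ℝ → ℝ} {F X : Matrix (Fin d) (Fin d) ℝ}

open scoped Matrix.Norms.Frobenius in
theorem nhds_basis_frob_le (X : Matrix (Fin d) (Fin d) ℝ) :
    (𝓝 X).HasBasis (0 < ·) fun ε ↦ {Y | frob (Y - X) ≤ ε} := by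
  have hfrob (Y : Matrix (Fin d) (Fin d) ℝ) : frob Y = ‖Y‖ := by
    simp [frob, frobenius_norm_def, Real.sqrt_eq_rpow]
  simpa only [hfrob, ← dist_eq_norm] using! Metric.nhds_basis_closedBall (x := X)

theorem bcLocalMin_iff_eventually :
    BCLocalMin h X ↔ X.PosSemidef ∧ ∀ᶠ Y in 𝓝[{Y | Y.PosSemidef}] X, h X ≤ h Y := by
  rw [BCLocalMin, eventually_nhdsWithin_iff, (nhds_basis_frob_le X).eventually_iff]
  grind

theorem bcStrictLocalMin_iff_eventually :
    BCStrictLocalMin h X ↔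
      X.PosSemidef ∧ ∀ᶠ Y in 𝓝[{Y | Y.PosSemidef}] X, Y ≠ X → h X < h Y := by
  rw [BCStrictLocalMin, eventually_nhdsWithin_iff, (nhds_basis_frob_le X).eventually_iff]
  grind

theorem dssSymLocalMin_iff_eventually :
    DSSSymLocalMin h F ↔ ∀ᶠ G in 𝓝[{G | G.IsSymm}] F, h (F * F) ≤ h (G * G) := by
  rw [DSSSymLocalMin, eventually_nhdsWithin_iff, (nhds_basis_frob_le F).eventually_iff]
  grind

theorem dssSymStrictLocalMin_iff_eventually :
    DSSSymStrictLocalMin h F ↔ ∀ᶠ G in 𝓝[{G | G.IsSymm}] F, G ≠ F → h (F * F) < h (G * G) := by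
  rw [DSSSymStrictLocalMin, eventually_nhdsWithin_iff, (nhds_basis_frob_le F).eventually_iff]
  grind

end FrobeniusNeighborhoods

section SymmetricMatrices

variable {d : ℕ} {h : Matrix (Fin d) (Fin d) ℝ → ℝ} {F : Matrix (Fin d) (Fin d) ℝ}

open scoped Matrix.Norms.L2Operator MatrixOrder

theorem isSelfAdjoint_iff_isSymm {n : Type*} {A : Matrix n n ℝ} : IsSelfAdjoint A ↔ A.IsSymm := by
  rw [IsSelfAdjoint, star_eq_conjTranspose, conjTranspose_eq_transpose_of_trivial, IsSymm]

theorem isEigOf_iff_mem_spectrum {a : ℝ} : IsEigOf F a ↔ a ∈ spectrum ℝ F := by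
  rw [← spectrum_toLin', ← Module.End.hasEigenvalue_iff_mem_spectrum]
  constructor
  · rintro ⟨v, hv0, hv⟩
    exact Module.End.hasEigenvalue_of_hasEigenvector
      (Module.End.hasEigenvector_iff.mpr ⟨Module.End.mem_eigenspace_iff.mpr hv, hv0⟩)
  · intro ha
    obtain ⟨v, hv⟩ := ha.exists_hasEigenvector
    exact ⟨v, hv.2, hv.apply_eq_smul⟩

theorem nhdsWithin_posSemidef_le_map_mul_self (hF : F.IsSymm) (hEC : EigCond F) :
    𝓝[{X | X.PosSemidef}] (F * F) ≤ map (fun G ↦ G * G) (𝓝[{G | G.IsSymm}] F) := by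
  have hneg : IsClosed (spectrum ℝ F ∩ Iio 0) := (F.finite_spectrum.inter_of_left _).isClosed
  have hspec : ∀ a ∈ spectrum ℝ F, a ≠ 0 → -a ∉ spectrum ℝ F := by
    intro a ha ha0 hna
    exact hEC a (-a) (isEigOf_iff_mem_spectrum.mpr ha) (isEigOf_iff_mem_spectrum.mpr hna) ha0
      (neg_ne_zero.mpr ha0) (add_neg_cancel a)
  have := nhdsWithin_nonneg_sq_le_map_sq (isSelfAdjoint_iff_isSymm.mpr hF) hneg hspec
  have hIci : Ici (0 : Matrix (Fin d) (Fin d) ℝ) = {X | X.PosSemidef} :=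
    Set.ext fun _ ↦ nonneg_iff_posSemidef
  simpa only [hIci, isSelfAdjoint_iff_isSymm, sq] using this

theorem frequently_mul_self_eq_of_not_eigCond (hF : F.IsSymm) (hEC : ¬ EigCond F) :
    ∃ᶠ G in 𝓝[{G | G.IsSymm}] F, G ≠ F ∧ G * G = F * F := by
  simp only [EigCond, not_forall, not_not] at hEC
  obtain ⟨a, b, ⟨v, hv0, hv⟩, ⟨w, hw0, hw⟩, ha, -, hab⟩ := hEC
  obtain rfl : b = -a := by linarith
  have hFK := mul_vecMulVec_sub_vecMulVec hv hw
  have hKF := vecMulVec_sub_vecMulVec_mul hF hv hw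
  have hskew : star (vecMulVec v w - vecMulVec w v) = -(vecMulVec v w - vecMulVec w v) := by
    simp [star_eq_conjTranspose, transpose_vecMulVec]
  have hKF_ne : (vecMulVec v w - vecMulVec w v) * F ≠ 0 := by
    rw [hKF]
    exact neg_ne_zero.mpr (smul_ne_zero ha (vecMulVec_add_vecMulVec_ne_zero hv0 hw0))
  have hsemi : SemiconjBy F (vecMulVec v w - vecMulVec w v) (-(vecMulVec v w - vecMulVec w v)) := by
    rw [SemiconjBy, Matrix.neg_mul, hKF, neg_neg, hFK]
  have hfreq :=
    frequently_isSelfAdjoint_sq_eq (isSelfAdjoint_iff_isSymm.mpr hF) hskew hsemi hKF_ne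
  rw [frequently_nhdsWithin_iff] at hfreq ⊢
  refine hfreq.mono fun G ⟨hsq, hG, hne⟩ ↦ ⟨⟨hne, ?_⟩, isSelfAdjoint_iff_isSymm.mp hG⟩
  rwa [sq, sq] at hsq

theorem eigCond_of_dssSymStrictLocalMin (hF : F.IsSymm) (hmin : DSSSymStrictLocalMin h F) :
    EigCond F := by
  by_contra hEC
  obtain ⟨G, ⟨hne, hsq⟩, hlt⟩ := ((frequently_mul_self_eq_of_not_eigCond hF hEC).and_eventually
    (dssSymStrictLocalMin_iff_eventually.mp hmin)).exists
  exact (hlt hne).ne (by rw [hsq])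

end SymmetricMatrices

theorem statement15_general {d : ℕ} (h : Matrix (Fin d) (Fin d) ℝ → ℝ)
    (F : Matrix (Fin d) (Fin d) ℝ) (hFsymm : F.IsSymm) :
    (DSSSymLocalMin h F → EigCond F → BCLocalMin h (F * F)) ∧
    (DSSSymStrictLocalMin h F → BCStrictLocalMin h (F * F)) := by
  have hpsd : (F * F).PosSemidef := by
    simpa only [conjTranspose_eq_transpose_of_trivial, hFsymm.eq] using
      posSemidef_conjTranspose_mul_self F
  refine ⟨fun hmin hEC ↦ bcLocalMin_iff_eventually.mpr ⟨hpsd, ?_⟩,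
    fun hmin ↦ bcStrictLocalMin_iff_eventually.mpr ⟨hpsd, ?_⟩⟩
  · exact nhdsWithin_posSemidef_le_map_mul_self hFsymm hEC (dssSymLocalMin_iff_eventually.mp hmin)
  · have hEC := eigCond_of_dssSymStrictLocalMin hFsymm hmin
    refine nhdsWithin_posSemidef_le_map_mul_self hFsymm hEC (eventually_map.mpr ?_)
    filter_upwards [dssSymStrictLocalMin_iff_eventually.mp hmin] with G hG hne
    exact hG (by rintro rfl; exact hne rfl)

/-- If `F ∈ S^d` is a local minimizer of (DSS-Sym) satisfying the eigenvalue condition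
(EC), then `X = F²` is a local minimizer of (BC); if `F` is a strict local minimizer of
(DSS-Sym), then `X = F²` is a strict local minimizer of (BC). -/
theorem statement15 {d : ℕ} (h : Matrix (Fin d) (Fin d) ℝ → ℝ) (hcont : Continuous h)
    (F : Matrix (Fin d) (Fin d) ℝ) (hFsymm : F.IsSymm) :
    (DSSSymLocalMin h F → EigCond F → BCLocalMin h (F * F)) ∧
    (DSSSymStrictLocalMin h F → BCStrictLocalMin h (F * F)) :=
  statement15_general h F hFsymm
end
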